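/- arXiv:2208.13981 — 3 statements merged into one kernel-verified Lean document; each statement's English description precedes it below -/
import Mathlib

section
/- Suppose the position tracking error q̃ : ℝ → (Fin n → ℝ) is differentiable and satisfies the closed-loop equation obtained from the virtual (backstepped) input η(t) = q̇_d(t) − q̃(t) − (1/2) M(t)⁻¹ M′(t) q̃(t), namely q̃′(t) = −q̃(t) − (1/2) M(t)⁻¹ M′(t) q̃(t) for all t. Then the function V₁(t) = (1/2) q̃(t)ᵀ M(t) q̃(t) is differentiable and satisfies V₁′(t) = − q̃(t)ᵀ M(t) q̃(t) for all t. -/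
open Matrix

/-!
For symmetric `M` the product rule reads `(qᵀ M q)′ = qᵀ M′ q + 2 qᵀ M q′`. Multiplying the
closed-loop equation by `M` gives `M q′ = -M q - (1/2) M′ q`: the correction term in the virtual
input is exactly what cancels `qᵀ M′ q`, and only `-2 qᵀ M q` remains.
-/

theorem dotProduct_mulVec_comm_of_isSymm {R ι : Type*} [NonUnitalCommSemiring R] [Fintype ι]
    {A : Matrix ι ι R} (hA : A.IsSymm) (u v : ι → R) : u ⬝ᵥ (A *ᵥ v) = v ⬝ᵥ (A *ᵥ u) := by
  rw [← dotProduct_transpose_mulVec, hA.eq]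

section ProductRule

variable {𝕜 𝔸 m n : Type*} [NontriviallyNormedField 𝕜] [NormedRing 𝔸] [NormedAlgebra 𝕜 𝔸]
  [Fintype n] {t : 𝕜}

theorem hasDerivAt_dotProduct {u v : 𝕜 → n → 𝔸} {u' v' : n → 𝔸}
    (hu : HasDerivAt u u' t) (hv : HasDerivAt v v' t) :
    HasDerivAt (fun s => u s ⬝ᵥ v s) (u' ⬝ᵥ v t + u t ⬝ᵥ v') t := by
  rw [hasDerivAt_pi] at hu hv
  simp only [dotProduct, ← Finset.sum_add_distrib]
  exact HasDerivAt.fun_sum fun i _ => (hu i).fun_mul (hv i)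

theorem hasDerivAt_mulVec [Finite m] {A : 𝕜 → Matrix m n 𝔸} {A' : Matrix m n 𝔸}
    {v : 𝕜 → n → 𝔸} {v' : n → 𝔸}
    (hA : ∀ i j, HasDerivAt (fun s => A s i j) (A' i j) t) (hv : HasDerivAt v v' t) :
    HasDerivAt (fun s => A s *ᵥ v s) (A' *ᵥ v t + A t *ᵥ v') t := by
  have := Fintype.ofFinite m
  exact hasDerivAt_pi.2 fun i => hasDerivAt_dotProduct (hasDerivAt_pi.2 (hA i)) hv

end ProductRule

section QuadraticForm

variable {𝕜 𝔸 ι : Type*} [NontriviallyNormedField 𝕜] [NormedCommRing 𝔸] [NormedAlgebra 𝕜 𝔸]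
  [Fintype ι] {t : 𝕜} {M : 𝕜 → Matrix ι ι 𝔸} {M' : Matrix ι ι 𝔸} {q : 𝕜 → ι → 𝔸} {q' : ι → 𝔸}

theorem hasDerivAt_dotProduct_mulVec_self
    (hM : ∀ i j, HasDerivAt (fun s => M s i j) (M' i j) t) (hsymm : (M t).IsSymm)
    (hq : HasDerivAt q q' t) :
    HasDerivAt (fun s => q s ⬝ᵥ (M s *ᵥ q s))
      (q t ⬝ᵥ (M' *ᵥ q t) + 2 * (q t ⬝ᵥ (M t *ᵥ q'))) t := by
  refine (hasDerivAt_dotProduct hq (hasDerivAt_mulVec hM hq)).congr_deriv ?_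
  rw [dotProduct_add, dotProduct_mulVec_comm_of_isSymm hsymm q']
  ring

theorem statement0_general [DecidableEq ι] [NeZero (2 : 𝕜)]
    (hM : ∀ i j, HasDerivAt (fun s => M s i j) (M' i j) t) (hsymm : (M t).IsSymm)
    (hunit : IsUnit (M t)) (hq : HasDerivAt q q' t)
    (hclosed : q' = -q t - (1 / 2 : 𝕜) • ((M t)⁻¹ *ᵥ (M' *ᵥ q t))) :
    HasDerivAt (fun s => (1 / 2 : 𝕜) • (q s ⬝ᵥ (M s *ᵥ q s))) (-(q t ⬝ᵥ (M t *ᵥ q t))) t := by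
  have hMq' : M t *ᵥ q' = -(M t *ᵥ q t) - (1 / 2 : 𝕜) • (M' *ᵥ q t) := by
    rw [hclosed, mulVec_sub, mulVec_neg, mulVec_smul, mulVec_mulVec,
      mul_nonsing_inv _ ((isUnit_iff_isUnit_det _).1 hunit), one_mulVec]
  refine ((hasDerivAt_dotProduct_mulVec_self hM hsymm hq).const_smul (1 / 2 : 𝕜)).congr_deriv ?_
  rw [hMq', dotProduct_sub, dotProduct_neg, dotProduct_smul, two_mul]
  have h_two : (2 : 𝕜) ≠ 0 := NeZero.ne 2
  match_scalars <;> field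

end QuadraticForm

/-- With the backstepped virtual input, the closed-loop position
tracking error satisfies `q̃′ = −q̃ − (1/2) M⁻¹ M′ q̃`, and then
`V₁(t) = (1/2) q̃(t)ᵀ M(t) q̃(t)` is differentiable with
`V₁′(t) = − q̃(t)ᵀ M(t) q̃(t)` for all `t`. -/
theorem statement0 (n : ℕ) (hn : 1 ≤ n)
    (M M' : ℝ → Matrix (Fin n) (Fin n) ℝ)
    (hMderiv : ∀ t : ℝ, ∀ i j : Fin n, HasDerivAt (fun s => M s i j) (M' t i j) t)
    (hMsymm : ∀ t : ℝ, (M t).IsSymm)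
    (hMpd : ∀ t : ℝ, (M t).PosDef)
    (qtil qtil' : ℝ → Fin n → ℝ)
    (hq : ∀ t : ℝ, HasDerivAt qtil (qtil' t) t)
    (hclosed : ∀ t : ℝ, qtil' t = -qtil t - (1/2 : ℝ) • ((M t)⁻¹ *ᵥ (M' t *ᵥ qtil t))) :
    ∀ t : ℝ, HasDerivAt (fun s => (1/2 : ℝ) * (qtil s ⬝ᵥ (M s *ᵥ qtil s)))
      (-(qtil t ⬝ᵥ (M t *ᵥ qtil t))) t :=
  fun t => statement0_general (hMderiv t) (hMsymm t) (hMpd t).isUnit (hq t) (hclosed t)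
end

section
/- Let λ > 0 with λ ≠ 1, let q̃, q_r : ℝ → (Fin n → ℝ) with q̃ differentiable and q̃′(t) + λ q̃(t) = q_r(t) for all t ≥ 0, and suppose there is c ≥ 0 with ‖q_r(t)‖ ≤ c · exp(−t) for all t ≥ 0. Then, with μ = min(λ, 1), the position tracking error satisfies ‖q̃(t)‖ ≤ (‖q̃(0)‖ + c/|λ − 1|) · exp(−μ t) for all t ≥ 0; in particular exponential decay of the filtered velocity tracking error implies exponential decay of the position tracking error. -/
/-!
Multiplying by the integrating factor `exp (λ t)` turns the mean value inequality into a
comparison principle: `‖q′ + λ q‖ ≤ b′ + λ b` and `‖q 0‖ ≤ b 0` force `‖q t‖ ≤ b t`. Taking for `b`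
the solution of `b′ + λ b = c exp (-κ t)` with `b 0 = ‖q 0‖`, namely
`b t = ‖q 0‖ exp (-λ t) + c / (λ - κ) * (exp (-κ t) - exp (-λ t))`, gives the decay estimate, since
both exponentials lie between `0` and `exp (-(min λ κ) t)`.
-/

open Matrix

section Comparison

open Set

variable {E : Type*} [NormedAddCommGroup E] [NormedSpace ℝ E]

lemma hasDerivAt_exp_mul (a t : ℝ) :
    HasDerivAt (fun s => Real.exp (a * s)) (Real.exp (a * t) * a) t := by
  simpa using ((hasDerivAt_id t).const_mul a).exp

lemma hasDerivWithinAt_exp_mul_smul {f : ℝ → E} {f' : E} {s : Set ℝ} {t : ℝ} (a : ℝ)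
    (hf : HasDerivWithinAt f f' s t) :
    HasDerivWithinAt (fun u => Real.exp (a * u) • f u) (Real.exp (a * t) • (f' + a • f t)) s t := by
  rw [smul_add, smul_smul]
  exact (hasDerivAt_exp_mul a t).hasDerivWithinAt.smul hf

theorem norm_le_of_norm_deriv_right_add_smul_le {f f' : ℝ → E} {b b' : ℝ → ℝ} {t₀ t₁ a : ℝ}
    (hf : ContinuousOn f (Icc t₀ t₁))
    (hf' : ∀ t ∈ Ico t₀ t₁, HasDerivWithinAt f (f' t) (Ici t) t)
    (hb : ContinuousOn b (Icc t₀ t₁))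
    (hb' : ∀ t ∈ Ico t₀ t₁, HasDerivWithinAt b (b' t) (Ici t) t)
    (h₀ : ‖f t₀‖ ≤ b t₀)
    (bound : ∀ t ∈ Ico t₀ t₁, ‖f' t + a • f t‖ ≤ b' t + a * b t) :
    ∀ t ∈ Icc t₀ t₁, ‖f t‖ ≤ b t := by
  have hexp : ContinuousOn (fun t => Real.exp (a * t)) (Icc t₀ t₁) := by fun_prop
  have norm_exp_smul (t : ℝ) (x : E) : ‖Real.exp (a * t) • x‖ = Real.exp (a * t) * ‖x‖ :=
    norm_smul_of_nonneg (Real.exp_pos _).le x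
  have weighted : ∀ t ∈ Icc t₀ t₁, ‖Real.exp (a * t) • f t‖ ≤ Real.exp (a * t) • b t :=
    image_norm_le_of_norm_deriv_right_le_deriv_boundary' (hexp.fun_smul hf)
      (fun t ht => hasDerivWithinAt_exp_mul_smul a (hf' t ht))
      (by rw [norm_exp_smul, smul_eq_mul]; gcongr)
      (hexp.fun_smul hb)
      (fun t ht => hasDerivWithinAt_exp_mul_smul a (hb' t ht))
      (fun t ht => by
        rw [norm_exp_smul]
        exact mul_le_mul_of_nonneg_left (bound t ht) (Real.exp_pos _).le)
  intro t ht
  refine le_of_mul_le_mul_left ?_ (Real.exp_pos (a * t))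
  simpa only [norm_exp_smul, smul_eq_mul] using weighted t ht

theorem norm_le_of_norm_deriv_right_add_smul_le_exp {f f' : ℝ → E} {a κ c T : ℝ} (haκ : a ≠ κ)
    (hf : ContinuousOn f (Icc 0 T))
    (hf' : ∀ t ∈ Ico 0 T, HasDerivWithinAt f (f' t) (Ici t) t)
    (bound : ∀ t ∈ Ico 0 T, ‖f' t + a • f t‖ ≤ c * Real.exp (-κ * t)) :
    ∀ t ∈ Icc 0 T, ‖f t‖ ≤
      ‖f 0‖ * Real.exp (-a * t) + c / (a - κ) * (Real.exp (-κ * t) - Real.exp (-a * t)) := by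
  have hne : a - κ ≠ 0 := sub_ne_zero.mpr haκ
  have hderiv (t : ℝ) :=
    ((hasDerivAt_exp_mul (-a) t).const_mul ‖f 0‖).add
      (((hasDerivAt_exp_mul (-κ) t).sub (hasDerivAt_exp_mul (-a) t)).const_mul (c / (a - κ)))
  refine norm_le_of_norm_deriv_right_add_smul_le (a := a) hf hf' (by fun_prop)
    (fun t _ => (hderiv t).hasDerivWithinAt) (by simp) fun t ht => (bound t ht).trans_eq ?_
  field_simp
  ring

end Comparison

lemma abs_exp_neg_mul_sub_exp_neg_mul_le (a κ : ℝ) {t : ℝ} (ht : 0 ≤ t) :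
    |Real.exp (-κ * t) - Real.exp (-a * t)| ≤ Real.exp (-(min a κ) * t) := by
  refine abs_sub_le_of_nonneg_of_le (Real.exp_pos _).le ?_ (Real.exp_pos _).le ?_ <;> gcongr
  · exact min_le_right a κ
  · exact min_le_left a κ

lemma sqrt_dotProduct_self {ι : Type*} [Fintype ι] (x : ι → ℝ) :
    Real.sqrt (x ⬝ᵥ x) = ‖WithLp.toLp 2 x‖ :=
  (norm_eq_sqrt_real_inner (WithLp.toLp 2 x)).symm

theorem statement6_general {E : Type*} [NormedAddCommGroup E] [NormedSpace ℝ E]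
    {q q' : ℝ → E} {lam κ c : ℝ} (hlam : lam ≠ κ)
    (hq : ContinuousOn q (Set.Ici 0))
    (hq' : ∀ t, 0 ≤ t → HasDerivWithinAt q (q' t) (Set.Ici t) t)
    (hdecay : ∀ t, 0 ≤ t → ‖q' t + lam • q t‖ ≤ c * Real.exp (-κ * t)) {t : ℝ} (ht : 0 ≤ t) :
    ‖q t‖ ≤ (‖q 0‖ + c / |lam - κ|) * Real.exp (-(min lam κ) * t) := by
  have hc : 0 ≤ c := by simpa using (norm_nonneg _).trans (hdecay 0 le_rfl)
  have hforced : c / (lam - κ) * (Real.exp (-κ * t) - Real.exp (-lam * t)) ≤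
      c / |lam - κ| * Real.exp (-(min lam κ) * t) :=
    calc
      _ ≤ |c / (lam - κ) * (Real.exp (-κ * t) - Real.exp (-lam * t))| := le_abs_self _
      _ = c / |lam - κ| * |Real.exp (-κ * t) - Real.exp (-lam * t)| := by
        rw [abs_mul, abs_div, abs_of_nonneg hc]
      _ ≤ c / |lam - κ| * Real.exp (-(min lam κ) * t) := by
        gcongr
        exact abs_exp_neg_mul_sub_exp_neg_mul_le lam κ ht
  calc
    ‖q t‖ ≤ ‖q 0‖ * Real.exp (-lam * t) +
        c / (lam - κ) * (Real.exp (-κ * t) - Real.exp (-lam * t)) :=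
      norm_le_of_norm_deriv_right_add_smul_le_exp hlam (hq.mono Set.Icc_subset_Ici_self)
        (fun s hs => hq' s hs.1) (fun s hs => hdecay s hs.1) t (Set.right_mem_Icc.mpr ht)
    _ ≤ ‖q 0‖ * Real.exp (-(min lam κ) * t) +
        c / |lam - κ| * Real.exp (-(min lam κ) * t) := by
      gcongr
      exact min_le_left lam κ
    _ = (‖q 0‖ + c / |lam - κ|) * Real.exp (-(min lam κ) * t) := (add_mul ..).symm

/-- If `q̃` is differentiable with `q̃′ + λ q̃ = q_r` on `t ≥ 0`
(λ > 0, λ ≠ 1), and `‖q_r(t)‖ ≤ c · exp(−t)` for `t ≥ 0` with `c ≥ 0`, then with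
`μ = min(λ, 1)` one has `‖q̃(t)‖ ≤ (‖q̃(0)‖ + c/|λ − 1|) · exp(−μ t)` for all
`t ≥ 0`. (Here `‖x‖ = Real.sqrt (x ⬝ᵥ x)` is the Euclidean norm.) -/
theorem statement6 (n : ℕ) (hn : 1 ≤ n) (lam : ℝ) (hlam : 0 < lam) (hlam1 : lam ≠ 1)
    (qtil qtil' qr : ℝ → Fin n → ℝ)
    (hq : ∀ t : ℝ, HasDerivAt qtil (qtil' t) t)
    (hrel : ∀ t : ℝ, 0 ≤ t → qtil' t + lam • qtil t = qr t)
    (c : ℝ) (hc : 0 ≤ c)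
    (hqrdecay : ∀ t : ℝ, 0 ≤ t → Real.sqrt (qr t ⬝ᵥ qr t) ≤ c * Real.exp (-t)) :
    ∀ t : ℝ, 0 ≤ t →
      Real.sqrt (qtil t ⬝ᵥ qtil t)
        ≤ (Real.sqrt (qtil 0 ⬝ᵥ qtil 0) + c / |lam - 1|)
            * Real.exp (-(min lam 1) * t) := by
  intro t ht
  simp only [sqrt_dotProduct_self] at hqrdecay ⊢
  have hq₂ (s : ℝ) : HasDerivAt (fun s => WithLp.toLp 2 (qtil s)) (WithLp.toLp 2 (qtil' s)) s :=
    (PiLp.hasFDerivAt_toLp 2 (qtil s)).comp_hasDerivAt s (hq s)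
  refine statement6_general hlam1 (fun s _ => (hq₂ s).continuousAt.continuousWithinAt)
    (fun s _ => (hq₂ s).hasDerivWithinAt) (fun s hs => ?_) ht
  simpa only [← hrel s hs, WithLp.toLp_add, WithLp.toLp_smul, neg_one_mul] using hqrdecay s hs
end

section
/- Suppose the trajectory q satisfies M(t) q̈(t) + C(t) q̇(t) + G(t) = τ(t) with the control law τ(t) = M(t)(q̈_d(t) + λ q̃′(t) + q_r(t)) + C(t)(q̇(t) + q_r(t)) + G(t), where q̃(t) = q_d(t) − q(t) and q_r(t) = q̃′(t) + λ q̃(t) with λ > 0, λ ≠ 1. Assume M′(t) = C(t) + C(t)ᵀ for all t (skew-symmetry of M′ − 2C), that P M(t) is symmetric for all t with P C(t) + C(t)ᵀ P = P M′(t) for all t, and that P M is uniformly positive definite: there is μ > 0 with xᵀ (P M(t)) x ≥ μ ‖x‖² for all t and x. Then the closed-loop trajectories are exponentially stable: there exists K ≥ 0 such that, with rate μ₀ = min(λ, 1), both ‖q_r(t)‖ ≤ K · exp(−t) and ‖q_d(t) − q(t)‖ ≤ K · exp(−μ₀ t) hold for all t ≥ 0; in particular q(t) → q_d(t) as t → ∞.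 -/
open Matrix

/-!
Since the gravity terms cancel, the filtered error solves `M q_r′ + (M + C) q_r = 0`. Along it the
energy `V = q_rᵀ (P M) q_r` satisfies `V′ = -2 V`: the derivative of `P M` contributes
`q_rᵀ (P C + Cᵀ P) q_r`, which is exactly what the Coriolis term removes. Hence `V` decays like
`exp (-2 t)` and uniform positivity of `P M` gives `‖q_r‖ = O(exp (-t))`. The tracking error is
then the output of the stable filter `e′ = -λ e + q_r`, and `λ ≠ 1` rules out the resonance that
would produce `t * exp (-t)`.
-/

open Set Filter Topology WithLp

section ExponentialEstimates

theorem le_mul_exp_of_hasDerivWithinAt_le {f f' : ℝ → ℝ} {k : ℝ}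
    (hf : ∀ t, 0 ≤ t → HasDerivWithinAt f (f' t) (Ici 0) t)
    (hle : ∀ t, 0 ≤ t → f' t ≤ k * f t) {t : ℝ} (ht : 0 ≤ t) :
    f t ≤ f 0 * Real.exp (k * t) := by
  have hgronwall := le_gronwallBound_of_liminf_deriv_right_le (δ := f 0) (K := k) (ε := 0)
    (fun s hs => (hf s hs.1).continuousWithinAt.mono Icc_subset_Ici_self)
    (fun s hs _ hr => ((hf s hs.1).mono (Ici_subset_Ici.2 hs.1)).liminf_right_slope_le hr)
    le_rfl (fun s hs => (hle s hs.1).trans_eq (add_zero _).symm) t ⟨ht, le_rfl⟩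
  rwa [gronwallBound_ε0, sub_zero] at hgronwall

theorem exp_sub_exp_div_le (a b : ℝ) {t : ℝ} (ht : 0 ≤ t) :
    (Real.exp (-b * t) - Real.exp (-a * t)) / (a - b) ≤
      Real.exp (-(min a b) * t) / |a - b| := by
  have ha : Real.exp (-a * t) ≤ Real.exp (-(min a b) * t) := by
    gcongr
    exact min_le_left a b
  have hb : Real.exp (-b * t) ≤ Real.exp (-(min a b) * t) := by
    gcongr
    exact min_le_right a b
  calc (Real.exp (-b * t) - Real.exp (-a * t)) / (a - b)
    _ ≤ |Real.exp (-b * t) - Real.exp (-a * t)| / |a - b| := by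
      rw [← abs_div]
      exact le_abs_self _
    _ ≤ Real.exp (-(min a b) * t) / |a - b| := by
      gcongr
      exact abs_sub_le_of_nonneg_of_le (Real.exp_pos _).le hb (Real.exp_pos _).le ha

variable {E : Type*} [NormedAddCommGroup E]

theorem tendsto_zero_of_norm_le_mul_exp {f : ℝ → E} {K c : ℝ} (hc : 0 < c)
    (hf : ∀ t, 0 ≤ t → ‖f t‖ ≤ K * Real.exp (-c * t)) : Tendsto f atTop (𝓝 0) := by
  have hexp : Tendsto (fun t => K * Real.exp (-c * t)) atTop (𝓝 0) := by
    simpa only [mul_zero, Function.comp_def, id] using (Real.tendsto_exp_atBot.comp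
      (tendsto_id.const_mul_atTop_of_neg (neg_lt_zero.2 hc))).const_mul K
  exact squeeze_zero_norm' ((eventually_ge_atTop 0).mono hf) hexp

variable [NormedSpace ℝ E] {a b A : ℝ} {e r : ℝ → E}

theorem norm_le_variation_of_constants (hab : a ≠ b)
    (he : ∀ t, 0 ≤ t → HasDerivWithinAt e (r t - a • e t) (Ici 0) t)
    (hr : ∀ t, 0 ≤ t → ‖r t‖ ≤ A * Real.exp (-b * t)) {t : ℝ} (ht : 0 ≤ t) :
    ‖e t‖ ≤ ‖e 0‖ * Real.exp (-a * t) +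
      A * ((Real.exp (-b * t) - Real.exp (-a * t)) / (a - b)) := by
  have hab' : a - b ≠ 0 := sub_ne_zero.2 hab
  have hexp (k s : ℝ) : HasDerivAt (fun s => Real.exp (k * s)) (k * Real.exp (k * s)) s := by
    simpa only [id, mul_one, mul_comm] using ((hasDerivAt_id s).const_mul k).exp
  have hderiv : ∀ s, 0 ≤ s → HasDerivWithinAt (fun s => Real.exp (a * s) • e s)
      (Real.exp (a * s) • r s) (Ici 0) s := fun s hs =>
    ((hexp a s).hasDerivWithinAt.fun_smul (he s hs)).congr_deriv (by module)
  have hbound : ∀ s, 0 ≤ s → ‖Real.exp (a * s) • r s‖ ≤ A * Real.exp ((a - b) * s) := fun s hs =>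
    calc ‖Real.exp (a * s) • r s‖
      _ = Real.exp (a * s) * ‖r s‖ := by rw [norm_smul, Real.norm_eq_abs, Real.abs_exp]
      _ ≤ Real.exp (a * s) * (A * Real.exp (-b * s)) := by gcongr; exact hr s hs
      _ = A * Real.exp ((a - b) * s) := by
        rw [mul_left_comm, ← Real.exp_add]
        ring_nf
  have hmajorant (s : ℝ) :
      HasDerivAt (fun s => ‖e 0‖ + A * ((Real.exp ((a - b) * s) - 1) / (a - b)))
        (A * Real.exp ((a - b) * s)) s :=
    (((((hexp (a - b) s).sub_const 1).div_const (a - b)).const_mul A).const_add ‖e 0‖).congr_deriv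
      (by field_simp)
  have hscaled : ‖Real.exp (a * t) • e t‖ ≤
      ‖e 0‖ + A * ((Real.exp ((a - b) * t) - 1) / (a - b)) :=
    image_norm_le_of_norm_deriv_right_le_deriv_boundary
      (fun s hs => (hderiv s hs.1).continuousWithinAt.mono Icc_subset_Ici_self)
      (fun s hs => (hderiv s hs.1).mono (Ici_subset_Ici.2 hs.1)) (by simp) hmajorant
      (fun s hs => hbound s hs.1) ⟨ht, le_rfl⟩
  rw [norm_smul, Real.norm_eq_abs, Real.abs_exp, ← le_div_iff₀' (Real.exp_pos _)] at hscaled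
  refine hscaled.trans_eq ?_
  have hsplit : Real.exp ((a - b) * t) = Real.exp (a * t) * Real.exp (-b * t) := by
    rw [← Real.exp_add]
    ring_nf
  rw [hsplit, neg_mul a, Real.exp_neg]
  field_simp

theorem norm_le_mul_exp_neg_min (hab : a ≠ b)
    (he : ∀ t, 0 ≤ t → HasDerivWithinAt e (r t - a • e t) (Ici 0) t)
    (hr : ∀ t, 0 ≤ t → ‖r t‖ ≤ A * Real.exp (-b * t)) {t : ℝ} (ht : 0 ≤ t) :
    ‖e t‖ ≤ (‖e 0‖ + A / |a - b|) * Real.exp (-(min a b) * t) := by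
  have hA : 0 ≤ A := by
    simpa only [mul_zero, Real.exp_zero, mul_one] using (norm_nonneg _).trans (hr 0 le_rfl)
  calc ‖e t‖
    _ ≤ ‖e 0‖ * Real.exp (-a * t) +
          A * ((Real.exp (-b * t) - Real.exp (-a * t)) / (a - b)) :=
      norm_le_variation_of_constants hab he hr ht
    _ ≤ ‖e 0‖ * Real.exp (-(min a b) * t) + A * (Real.exp (-(min a b) * t) / |a - b|) := by
      refine add_le_add ?_ (mul_le_mul_of_nonneg_left (exp_sub_exp_div_le a b ht) hA)
      gcongr
      exact min_le_left a b
    _ = (‖e 0‖ + A / |a - b|) * Real.exp (-(min a b) * t) := by ring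

end ExponentialEstimates

section QuadraticEnergy

variable {ι : Type*} [Fintype ι]

theorem norm_toLp_two_eq_sqrt_dotProduct (x : ι → ℝ) : ‖toLp 2 x‖ = √(x ⬝ᵥ x) := by
  simp only [EuclideanSpace.norm_eq, Real.norm_eq_abs, abs_mul_abs_self, sq, dotProduct]

theorem hasDerivWithinAt_const_mul_apply {m n : Type*} {P : Matrix m ι ℝ} {M : ℝ → Matrix ι n ℝ}
    {M' : Matrix ι n ℝ} {s : Set ℝ} {t : ℝ}
    (hM : ∀ i j, HasDerivWithinAt (fun t => M t i j) (M' i j) s t) (i : m) (j : n) :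
    HasDerivWithinAt (fun t => (P * M t) i j) ((P * M') i j) s t := by
  simp only [Matrix.mul_apply]
  exact HasDerivWithinAt.fun_sum fun k _ => (hM k j).const_mul (P i k)

/-- The quadratic energy `xᵀ S x` of a trajectory `x` for a time-dependent weight `S`. It serves as
the Lyapunov function of the closed loop, with weight `P M` and trajectory `q_r`. -/
def energy (S : ℝ → Matrix ι ι ℝ) (x : ℝ → ι → ℝ) (t : ℝ) : ℝ :=
  x t ⬝ᵥ S t *ᵥ x t

theorem hasDerivWithinAt_energy {x : ℝ → ι → ℝ} {x' : ι → ℝ} {S : ℝ → Matrix ι ι ℝ}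
    {S' : Matrix ι ι ℝ} {s : Set ℝ} {t : ℝ} (hx : HasDerivWithinAt x x' s t)
    (hS : ∀ i j, HasDerivWithinAt (fun t => S t i j) (S' i j) s t) :
    HasDerivWithinAt (energy S x)
      (x' ⬝ᵥ S t *ᵥ x t + x t ⬝ᵥ S' *ᵥ x t + x t ⬝ᵥ S t *ᵥ x') s t := by
  have hxi := hasDerivWithinAt_pi.1 hx
  have hsum : HasDerivWithinAt (energy S x)
      (∑ i, (x' i * ∑ j, S t i j * x t j + x t i * ∑ j, (S' i j * x t j + S t i j * x' j))) s t :=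
    HasDerivWithinAt.fun_sum fun i _ =>
      (hxi i).mul (HasDerivWithinAt.fun_sum fun j _ => (hS i j).mul (hxi j))
  refine hsum.congr_deriv ?_
  simp only [dotProduct, mulVec, Finset.sum_add_distrib, mul_add, add_assoc]

theorem norm_le_mul_exp_of_energy_decay {S : ℝ → Matrix ι ι ℝ} {x : ℝ → ι → ℝ} {c μ : ℝ}
    (hμ : 0 < μ) (hS : ∀ t, 0 ≤ t → ∀ v : ι → ℝ, μ * (v ⬝ᵥ v) ≤ v ⬝ᵥ S t *ᵥ v)
    (hV : ∀ t, 0 ≤ t → HasDerivWithinAt (energy S x) (-(2 * c) * energy S x t) (Ici 0) t)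
    {t : ℝ} (ht : 0 ≤ t) :
    ‖toLp 2 (x t)‖ ≤ √(energy S x 0 / μ) * Real.exp (-c * t) := by
  have hdecay : energy S x t ≤ energy S x 0 * Real.exp (-(2 * c) * t) :=
    le_mul_exp_of_hasDerivWithinAt_le hV (fun _ _ => le_rfl) ht
  have hsq : Real.exp (-(2 * c) * t) = Real.exp (-c * t) ^ 2 := by
    rw [← Real.exp_nat_mul]
    push_cast
    ring_nf
  calc ‖toLp 2 (x t)‖
    _ = √(x t ⬝ᵥ x t) := norm_toLp_two_eq_sqrt_dotProduct _
    _ ≤ √(energy S x 0 / μ * Real.exp (-c * t) ^ 2) := by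
      apply Real.sqrt_le_sqrt
      rw [← hsq, div_mul_eq_mul_div, le_div_iff₀' hμ]
      exact (hS t ht (x t)).trans hdecay
    _ = √(energy S x 0 / μ) * Real.exp (-c * t) := by
      rw [Real.sqrt_mul' _ (sq_nonneg _), Real.sqrt_sq (Real.exp_pos _).le]

end QuadraticEnergy

section ClosedLoop

variable {ι : Type*} [Fintype ι]

theorem mulVec_filteredError_deriv {M C : Matrix ι ι ℝ} {G τ q' q'' qd' qd'' r : ι → ℝ} {lam : ℝ}
    (hsys : M *ᵥ q'' + C *ᵥ q' + G = τ)
    (hctrl : τ = M *ᵥ (qd'' + lam • (qd' - q') + r) + C *ᵥ (q' + r) + G) :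
    M *ᵥ ((qd'' - q'') + lam • (qd' - q')) = -(M *ᵥ r + C *ᵥ r) := by
  have hbalance := hsys.trans hctrl
  simp only [mulVec_add, mulVec_sub] at hbalance ⊢
  linear_combination -hbalance

theorem closedLoop_quadraticForm_deriv {P M M' C : Matrix ι ι ℝ} {x x' : ι → ℝ} {c : ℝ}
    (hP : P.IsSymm) (hPM : (P * M).IsSymm) (hPC : P * C + Cᵀ * P = P * M')
    (hloop : M *ᵥ x' = -(c • M *ᵥ x + C *ᵥ x)) :
    x' ⬝ᵥ (P * M) *ᵥ x + x ⬝ᵥ (P * M') *ᵥ x + x ⬝ᵥ (P * M) *ᵥ x' =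
      -(2 * c) * (x ⬝ᵥ (P * M) *ᵥ x) := by
  have hswap : x' ⬝ᵥ (P * M) *ᵥ x = x ⬝ᵥ (P * M) *ᵥ x' := by
    rw [← dotProduct_transpose_mulVec, hPM]
  have hvelocity : x ⬝ᵥ (P * M) *ᵥ x' =
      -(c * (x ⬝ᵥ (P * M) *ᵥ x) + x ⬝ᵥ (P * C) *ᵥ x) := by
    simp only [← mulVec_mulVec, hloop, mulVec_neg, mulVec_add, mulVec_smul, dotProduct_neg,
      dotProduct_add, dotProduct_smul, smul_eq_mul]
  have hcoriolis : x ⬝ᵥ (P * M') *ᵥ x = 2 * (x ⬝ᵥ (P * C) *ᵥ x) := by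
    have htranspose : Cᵀ * P = (P * C)ᵀ := by rw [transpose_mul, hP]
    rw [← hPC, htranspose, add_mulVec, dotProduct_add, dotProduct_transpose_mulVec, two_mul]
  rw [hswap, hvelocity, hcoriolis]
  ring

theorem closedLoop_norm_le_mul_exp {P : Matrix ι ι ℝ} {M M' C : ℝ → Matrix ι ι ℝ}
    {x x' : ℝ → ι → ℝ} {c μ : ℝ}
    (hx : ∀ t, 0 ≤ t → HasDerivWithinAt x (x' t) (Ici 0) t)
    (hM : ∀ t, 0 ≤ t → ∀ i j, HasDerivWithinAt (fun s => M s i j) (M' t i j) (Ici 0) t)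
    (hloop : ∀ t, 0 ≤ t → M t *ᵥ x' t = -(c • M t *ᵥ x t + C t *ᵥ x t))
    (hP : P.IsSymm) (hPM : ∀ t, 0 ≤ t → (P * M t).IsSymm)
    (hPC : ∀ t, 0 ≤ t → P * C t + (C t)ᵀ * P = P * M' t) (hμ : 0 < μ)
    (hunif : ∀ t, 0 ≤ t → ∀ v : ι → ℝ, μ * (v ⬝ᵥ v) ≤ v ⬝ᵥ (P * M t) *ᵥ v)
    {t : ℝ} (ht : 0 ≤ t) :
    ‖toLp 2 (x t)‖ ≤ √(energy (fun s => P * M s) x 0 / μ) * Real.exp (-c * t) :=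
  norm_le_mul_exp_of_energy_decay hμ hunif (fun s hs =>
    (hasDerivWithinAt_energy (hx s hs) (hasDerivWithinAt_const_mul_apply (hM s hs))).congr_deriv
      (closedLoop_quadraticForm_deriv hP (hPM s hs) (hPC s hs) (hloop s hs))) ht

end ClosedLoop

theorem statement7_general {ι : Type*} [Fintype ι] {lam : ℝ} (hlam : 0 < lam) (hlam1 : lam ≠ 1)
    {q q' q'' qd qd' qd'' : ℝ → ι → ℝ}
    (hq : ∀ t, 0 ≤ t → HasDerivWithinAt q (q' t) (Ici 0) t)
    (hq' : ∀ t, 0 ≤ t → HasDerivWithinAt q' (q'' t) (Ici 0) t)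
    (hqd : ∀ t, 0 ≤ t → HasDerivWithinAt qd (qd' t) (Ici 0) t)
    (hqd' : ∀ t, 0 ≤ t → HasDerivWithinAt qd' (qd'' t) (Ici 0) t)
    {M M' C : ℝ → Matrix ι ι ℝ} {G τ : ℝ → ι → ℝ}
    (hM : ∀ t, 0 ≤ t → ∀ i j, HasDerivWithinAt (fun s => M s i j) (M' t i j) (Ici 0) t)
    {qr : ℝ → ι → ℝ} (hqr : ∀ t, 0 ≤ t → qr t = (qd' t - q' t) + lam • (qd t - q t))
    (hsys : ∀ t, 0 ≤ t → M t *ᵥ q'' t + C t *ᵥ q' t + G t = τ t)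
    (hctrl : ∀ t, 0 ≤ t → τ t =
      M t *ᵥ (qd'' t + lam • (qd' t - q' t) + qr t) + C t *ᵥ (q' t + qr t) + G t)
    {P : Matrix ι ι ℝ} (hP : P.IsSymm) (hPM : ∀ t, 0 ≤ t → (P * M t).IsSymm)
    (hPC : ∀ t, 0 ≤ t → P * C t + (C t)ᵀ * P = P * M' t) {μ : ℝ} (hμ : 0 < μ)
    (hunif : ∀ t, 0 ≤ t → ∀ x : ι → ℝ, μ * (x ⬝ᵥ x) ≤ x ⬝ᵥ (P * M t) *ᵥ x) :
    ∃ K : ℝ, 0 ≤ K ∧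
      (∀ t, 0 ≤ t → √(qr t ⬝ᵥ qr t) ≤ K * Real.exp (-t)) ∧
      (∀ t, 0 ≤ t → √((qd t - q t) ⬝ᵥ (qd t - q t)) ≤ K * Real.exp (-(min lam 1) * t)) ∧
      Tendsto (fun t => qd t - q t) atTop (𝓝 0) := by
  have hqr' : ∀ t, 0 ≤ t →
      HasDerivWithinAt qr ((qd'' t - q'' t) + lam • (qd' t - q' t)) (Ici 0) t := fun t ht =>
    (((hqd' t ht).sub (hq' t ht)).add (((hqd t ht).sub (hq t ht)).const_smul lam)).congr hqr
      (hqr t ht)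
  have hfilter : ∀ t, 0 ≤ t → HasDerivWithinAt (fun t => toLp 2 (qd t - q t))
      (toLp 2 (qr t) - lam • toLp 2 (qd t - q t)) (Ici 0) t := fun t ht =>
    ((PiLp.hasFDerivAt_toLp (𝕜 := ℝ) 2 _).comp_hasDerivWithinAt t
      ((hqd t ht).sub (hq t ht))).congr_deriv <| by
        change toLp 2 (qd' t - q' t) = _
        rw [hqr t ht, toLp_add, toLp_smul, add_sub_cancel_right]
  let A := √(energy (fun s => P * M s) qr 0 / μ)
  have hqr_le : ∀ t, 0 ≤ t → ‖toLp 2 (qr t)‖ ≤ A * Real.exp (-1 * t) := fun t ht =>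
    closedLoop_norm_le_mul_exp hqr' hM
      (fun s hs => by rw [one_smul, mulVec_filteredError_deriv (hsys s hs) (hctrl s hs)])
      hP hPM hPC hμ hunif ht
  let B := ‖toLp 2 (qd 0 - q 0)‖ + A / |lam - 1|
  have herr_le : ∀ t, 0 ≤ t → ‖toLp 2 (qd t - q t)‖ ≤ B * Real.exp (-(min lam 1) * t) :=
    fun t ht => norm_le_mul_exp_neg_min hlam1 hfilter hqr_le ht
  refine ⟨max A B, le_max_of_le_left (Real.sqrt_nonneg _), fun t ht => ?_, fun t ht => ?_, ?_⟩
  · rw [← norm_toLp_two_eq_sqrt_dotProduct, ← neg_one_mul t]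
    exact (hqr_le t ht).trans (by gcongr; exact le_max_left A B)
  · rw [← norm_toLp_two_eq_sqrt_dotProduct]
    exact (herr_le t ht).trans (by gcongr; exact le_max_right A B)
  · exact ((PiLp.continuous_ofLp 2 _).tendsto 0).comp
      (tendsto_zero_of_norm_le_mul_exp (lt_min hlam one_pos) herr_le)

/-- For the mechanical system `M q̈ + C q̇ + G = τ` under the control
law `τ = M(q̈_d + λ q̃′ + q_r) + C(q̇ + q_r) + G` (with `q̃ = q_d − q`,
`q_r = q̃′ + λ q̃`, `λ > 0`, `λ ≠ 1`), assuming the skew-symmetry property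
`M′ = C + Cᵀ`, that `P M(t)` is symmetric with `P C(t) + C(t)ᵀ P = P M′(t)`, and
that `P M` is uniformly positive definite (`xᵀ (P M(t)) x ≥ μ ‖x‖²`, `μ > 0`),
the closed-loop trajectories are exponentially stable: there is `K ≥ 0` with
`‖q_r(t)‖ ≤ K exp(−t)` and `‖q_d(t) − q(t)‖ ≤ K exp(−min(λ,1) t)` for `t ≥ 0`;
in particular `q(t) → q_d(t)` as `t → ∞`.
(Here `‖x‖ = Real.sqrt (x ⬝ᵥ x)` is the Euclidean norm.) -/
theorem statement7 (n : ℕ) (hn : 1 ≤ n) (lam : ℝ) (hlam : 0 < lam) (hlam1 : lam ≠ 1)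
    (q q' q'' qd qd' qd'' : ℝ → Fin n → ℝ)
    (hq : ∀ t : ℝ, HasDerivAt q (q' t) t)
    (hq' : ∀ t : ℝ, HasDerivAt q' (q'' t) t)
    (hqd : ∀ t : ℝ, HasDerivAt qd (qd' t) t)
    (hqd' : ∀ t : ℝ, HasDerivAt qd' (qd'' t) t)
    (M M' C : ℝ → Matrix (Fin n) (Fin n) ℝ) (G τ : ℝ → Fin n → ℝ)
    (hMderiv : ∀ t : ℝ, ∀ i j : Fin n, HasDerivAt (fun s => M s i j) (M' t i j) t)
    (hMsymm : ∀ t : ℝ, (M t).IsSymm)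
    (hMpd : ∀ t : ℝ, (M t).PosDef)
    (hCcont : ∀ i j : Fin n, Continuous fun t => C t i j)
    (qr : ℝ → Fin n → ℝ)
    (hqrdef : ∀ t : ℝ, qr t = (qd' t - q' t) + lam • (qd t - q t))
    (hsys : ∀ t : ℝ, M t *ᵥ q'' t + C t *ᵥ q' t + G t = τ t)
    (hctrl : ∀ t : ℝ, τ t
      = M t *ᵥ (qd'' t + lam • (qd' t - q' t) + qr t)
        + C t *ᵥ (q' t + qr t) + G t)
    (hskew : ∀ t : ℝ, M' t = C t + (C t)ᵀ)
    (P : Matrix (Fin n) (Fin n) ℝ) (hPsymm : P.IsSymm) (hPpd : P.PosDef)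
    (hPM : ∀ t : ℝ, (P * M t).IsSymm)
    (hPC : ∀ t : ℝ, P * C t + (C t)ᵀ * P = P * M' t)
    (μ : ℝ) (hμ : 0 < μ)
    (hunif : ∀ t : ℝ, ∀ x : Fin n → ℝ, μ * (x ⬝ᵥ x) ≤ x ⬝ᵥ ((P * M t) *ᵥ x)) :
    ∃ K : ℝ, 0 ≤ K ∧
      (∀ t : ℝ, 0 ≤ t → Real.sqrt (qr t ⬝ᵥ qr t) ≤ K * Real.exp (-t)) ∧
      (∀ t : ℝ, 0 ≤ t →
        Real.sqrt ((qd t - q t) ⬝ᵥ (qd t - q t)) ≤ K * Real.exp (-(min lam 1) * t)) ∧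
      Filter.Tendsto (fun t => qd t - q t) Filter.atTop (nhds 0) :=
  statement7_general hlam hlam1 (fun t _ => (hq t).hasDerivWithinAt)
    (fun t _ => (hq' t).hasDerivWithinAt) (fun t _ => (hqd t).hasDerivWithinAt)
    (fun t _ => (hqd' t).hasDerivWithinAt) (fun t _ i j => (hMderiv t i j).hasDerivWithinAt)
    (fun t _ => hqrdef t) (fun t _ => hsys t) (fun t _ => hctrl t) hPsymm (fun t _ => hPM t)
    (fun t _ => hPC t) hμ (fun t _ => hunif t)
end
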